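/- Let S be a 3×3 real Fourier matrix satisfying the integrality hypothesis. Then the multiset of degrees {k₁, k₂} equals {1, 2}, and there is a permutation σ of {0,1,2} with σ(0) = 0 such that S_{σ(i),σ(j)} = M_{ij} for all i, j, where M = [[1/2, 1/2, 1/√2], [1/2, 1/2, −1/√2], [1/√2, −1/√2, 0]]. -/

import Mathlib

open Complex Matrix BigOperators

namespace FourierPaper

noncomputable section

/-- A Fourier matrix: symmetric, unitary, positive real 0-th column,
integral structure constants `N_{ijk}`. -/
structure IsFourier {r : ℕ} [NeZero r] (S : Matrix (Fin r) (Fin r) ℂ) : Prop where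
  symm : ∀ i j, S i j = S j i
  unitary : S * S.conjTranspose = 1
  col0_real : ∀ i, (S i 0).im = 0
  col0_pos : ∀ i, 0 < (S i 0).re
  structInt : ∀ i j k : Fin r, ∃ z : ℤ,
    (∑ l, S l i * S l j * (starRingEnd ℂ) (S l k) / S l 0) = (z : ℂ)

/-- The Allen matrix of `S`: `s i j = S i j / S i 0`. -/
def allen {r : ℕ} [NeZero r] (S : Matrix (Fin r) (Fin r) ℂ) : Matrix (Fin r) (Fin r) ℂ :=
  fun i j => S i j / S i 0

/-- The character table (first eigenmatrix): `p i j = s i j * s 0 j`. -/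
def charTable {r : ℕ} [NeZero r] (S : Matrix (Fin r) (Fin r) ℂ) : Matrix (Fin r) (Fin r) ℂ :=
  fun i j => allen S i j * allen S 0 j

/-- The norm `d_i = ∑_j |s i j|²`. -/
def nrm {r : ℕ} [NeZero r] (S : Matrix (Fin r) (Fin r) ℂ) (i : Fin r) : ℝ :=
  ∑ j, Complex.normSq (allen S i j)

/-- The degree `k_j = s_{0j}²` (a positive real, as `s 0 j` is a positive real). -/
def deg {r : ℕ} [NeZero r] (S : Matrix (Fin r) (Fin r) ℂ) (j : Fin r) : ℝ :=
  ((allen S 0 j).re) ^ 2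

/-- The structure constant `N_{ijk}`. -/
def Nstruct {r : ℕ} [NeZero r] (S : Matrix (Fin r) (Fin r) ℂ) (i j k : Fin r) : ℂ :=
  ∑ l, S l i * S l j * (starRingEnd ℂ) (S l k) / S l 0

/-- The structure constant `λ_{ijk}` of the character-table basis. -/
def lam {r : ℕ} [NeZero r] (S : Matrix (Fin r) (Fin r) ℂ) (i j k : Fin r) : ℂ :=
  Nstruct S i j k * allen S 0 i * allen S 0 j / allen S 0 k

/-- `S` has all real entries. -/
def RealMatrix {r : ℕ} (S : Matrix (Fin r) (Fin r) ℂ) : Prop :=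
  ∀ i j, (S i j).im = 0

/-- Integrality hypothesis: every norm `d_i` is a positive integer dividing `d_0`. -/
def IntegralityHyp {r : ℕ} [NeZero r] (S : Matrix (Fin r) (Fin r) ℂ) : Prop :=
  ∃ D : Fin r → ℕ, (∀ i, 0 < D i) ∧ (∀ i, nrm S i = (D i : ℝ)) ∧ (∀ i, D i ∣ D 0)

/-- The unique (up to simultaneous permutation) `3 × 3` real Fourier matrix. -/
def rank3Matrix : Matrix (Fin 3) (Fin 3) ℂ :=
  !![1/2, 1/2, ((Real.sqrt 2 : ℝ) : ℂ)⁻¹;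
     1/2, 1/2, -((Real.sqrt 2 : ℝ) : ℂ)⁻¹;
     ((Real.sqrt 2 : ℝ) : ℂ)⁻¹, -((Real.sqrt 2 : ℝ) : ℂ)⁻¹, 0]

/-!
The rows of the Allen matrix `s` are characters of the ring with structure constants `N_{ijk}`:
`s_{li} s_{lj} = ∑ₖ N_{ijk} s_{lk}`. Row `0` consists of the square roots of the degrees, so for a
real `3 × 3` matrix it gives `k₁ = 1 + N₁₁₁ √k₁ + N₁₁₂ √k₂` with integer coefficients. If `k₁ ≤ k₂`,
integrality leaves only `(k₁, k₂) = (1, 1), (1, 2), (2, 3)`. The relation has no integer solution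
for `(2, 3)`. For `(1, 1)` the symmetry of `S` forces `N₁₁₂ = N₁₂₂`, against the parity of
`1 = √k₁ √k₂ = N₁₁₂ + N₁₂₂`. For `(1, 2)` irrationality of `√2` gives `N₁₁₁ = N₁₁₂ = 0`, hence
`s_{l1}² = 1` for every `l`, and orthogonality of the rows fixes all entries.
-/

theorem eq_or_eq_of_dvd_one_add_add_of_le {m n : ℕ} (hm : m ∣ 1 + m + n) (hn : n ∣ 1 + m + n)
    (hmn : m ≤ n) : (m = 1 ∧ n = 1) ∨ (m = 1 ∧ n = 2) ∨ (m = 2 ∧ n = 3) := by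
  have hm_pos : 0 < m := Nat.pos_of_dvd_of_pos hm (by lia)
  have hn' : n ∣ 1 + m := (Nat.dvd_add_left dvd_rfl).1 hn
  have hle : n ≤ 1 + m := Nat.le_of_dvd (by lia) hn'
  obtain rfl | rfl : n = m ∨ n = m + 1 := by lia
  · have : n ∣ 1 := (Nat.dvd_add_left dvd_rfl).1 hn'
    have := Nat.dvd_one.1 this
    lia
  · have hsum : 1 + m + (m + 1) = 2 + m * 2 := by ring
    have : m ∣ 2 := (Nat.dvd_add_left (dvd_mul_right m 2)).1 (hsum ▸ hm)
    have := Nat.le_of_dvd two_pos this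
    lia

theorem int_eq_zero_of_add_mul_irrational_eq_zero {x : ℝ} (hx : Irrational x) {a b : ℤ}
    (h : a + b * x = 0) : a = 0 ∧ b = 0 := by
  have hb : b = 0 := by
    by_contra hb
    exact ((hx.intCast_mul hb).intCast_add a).ne_zero h
  refine ⟨?_, hb⟩
  simpa [hb] using h

theorem RealMatrix.conj_apply {r : ℕ} {S : Matrix (Fin r) (Fin r) ℂ} (hreal : RealMatrix S)
    (i j : Fin r) : starRingEnd ℂ (S i j) = S i j :=
  conj_eq_iff_im.2 (hreal i j)

theorem deg_nonneg {r : ℕ} [NeZero r] {S : Matrix (Fin r) (Fin r) ℂ} (j : Fin r) :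
    0 ≤ deg S j :=
  sq_nonneg _

section Permutation

variable {r : ℕ} [NeZero r] {S : Matrix (Fin r) (Fin r) ℂ} {σ : Equiv.Perm (Fin r)}

theorem IsFourier.submatrix (hS : IsFourier S) (hσ : σ 0 = 0) : IsFourier (S.submatrix σ σ) where
  symm _ _ := hS.symm _ _
  unitary := by
    rw [conjTranspose_submatrix, submatrix_mul_equiv, hS.unitary, submatrix_one_equiv]
  col0_real i := by simpa [hσ] using hS.col0_real (σ i)
  col0_pos i := by simpa [hσ] using hS.col0_pos (σ i)
  structInt i j k := by
    obtain ⟨z, hz⟩ := hS.structInt (σ i) (σ j) (σ k)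
    refine ⟨z, ?_⟩
    simp only [submatrix_apply, hσ]
    rw [← hz]
    exact Equiv.sum_comp σ fun l =>
      S l (σ i) * S l (σ j) * (starRingEnd ℂ) (S l (σ k)) / S l 0

theorem allen_submatrix (hσ : σ 0 = 0) :
    allen (S.submatrix σ σ) = (allen S).submatrix σ σ := by
  ext i j
  simp only [allen, submatrix_apply, hσ]

theorem deg_submatrix (hσ : σ 0 = 0) (j : Fin r) : deg (S.submatrix σ σ) j = deg S (σ j) := by
  simp only [deg, allen_submatrix hσ, submatrix_apply, hσ]

theorem nrm_submatrix (hσ : σ 0 = 0) (i : Fin r) : nrm (S.submatrix σ σ) i = nrm S (σ i) := by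
  simp only [nrm, allen_submatrix hσ, submatrix_apply]
  exact Equiv.sum_comp σ fun j => normSq (allen S (σ i) j)

theorem IntegralityHyp.submatrix (hint : IntegralityHyp S) (hσ : σ 0 = 0) :
    IntegralityHyp (S.submatrix σ σ) := by
  obtain ⟨D, hpos, hnrm, hdvd⟩ := hint
  exact ⟨D ∘ σ, fun i => hpos (σ i), fun i => (nrm_submatrix hσ i).trans (hnrm (σ i)),
    fun i => by simpa only [Function.comp_apply, hσ] using hdvd (σ i)⟩

end Permutation

namespace IsFourier

section General

variable {r : ℕ} [NeZero r] {S : Matrix (Fin r) (Fin r) ℂ}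

theorem apply_zero_ne_zero (hS : IsFourier S) (i : Fin r) : S i 0 ≠ 0 :=
  fun h => (hS.col0_pos i).ne' (by simp [h])

theorem ofReal_re_apply_zero (hS : IsFourier S) (i : Fin r) : ((S i 0).re : ℂ) = S i 0 :=
  conj_eq_iff_re.1 (conj_eq_iff_im.2 (hS.col0_real i))

theorem sum_mul_conj (hS : IsFourier S) (i j : Fin r) :
    ∑ l, S i l * starRingEnd ℂ (S j l) = if i = j then 1 else 0 := by
  have h := congrFun₂ hS.unitary i j
  rwa [mul_apply, one_apply] at h

theorem sum_mul (hS : IsFourier S) (hreal : RealMatrix S) (i j : Fin r) :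
    ∑ l, S i l * S j l = if i = j then 1 else 0 := by
  simpa only [hreal.conj_apply] using hS.sum_mul_conj i j

theorem allen_zero_zero (hS : IsFourier S) : allen S 0 0 = 1 :=
  div_self (hS.apply_zero_ne_zero 0)

theorem deg_zero (hS : IsFourier S) : deg S 0 = 1 := by
  simp [deg, hS.allen_zero_zero]

theorem allen_zero_eq_div (hS : IsFourier S) (j : Fin r) :
    allen S 0 j = (((S j 0).re / (S 0 0).re : ℝ) : ℂ) := by
  rw [ofReal_div, hS.ofReal_re_apply_zero, hS.ofReal_re_apply_zero, allen, hS.symm]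

theorem deg_eq_sq_div (hS : IsFourier S) (j : Fin r) :
    deg S j = ((S j 0).re / (S 0 0).re) ^ 2 := by
  rw [deg, hS.allen_zero_eq_div, ofReal_re]

theorem allen_zero_eq_sqrt_deg (hS : IsFourier S) (j : Fin r) :
    allen S 0 j = (√(deg S j) : ℂ) := by
  rw [hS.deg_eq_sq_div, Real.sqrt_sq (div_pos (hS.col0_pos j) (hS.col0_pos 0)).le,
    hS.allen_zero_eq_div]

theorem apply_zero_eq_sqrt_deg_mul (hS : IsFourier S) (j : Fin r) :
    S j 0 = √(deg S j) * S 0 0 := by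
  rw [← hS.allen_zero_eq_sqrt_deg, allen, div_mul_cancel₀ _ (hS.apply_zero_ne_zero 0), hS.symm]

theorem nrm_eq_inv_sq (hS : IsFourier S) (i : Fin r) : nrm S i = ((S i 0).re ^ 2)⁻¹ := by
  have hrow : ∑ j, normSq (S i j) = 1 := by
    have h := hS.sum_mul_conj i i
    simp only [mul_conj, if_true] at h
    exact_mod_cast h
  have hcol : normSq (S i 0) = (S i 0).re ^ 2 := by
    rw [← hS.ofReal_re_apply_zero, normSq_ofReal, ofReal_re, sq]
  simp only [nrm, allen, map_div₀, ← Finset.sum_div, hrow, hcol, one_div]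

theorem nrm_zero_eq_sum_deg (hS : IsFourier S) : nrm S 0 = ∑ j, deg S j := by
  refine Finset.sum_congr rfl fun j _ => ?_
  rw [deg, hS.allen_zero_eq_div, normSq_ofReal, ofReal_re, sq]

theorem deg_mul_nrm (hS : IsFourier S) (j : Fin r) : deg S j * nrm S j = nrm S 0 := by
  have hj := (hS.col0_pos j).ne'
  rw [hS.deg_eq_sq_div, hS.nrm_eq_inv_sq, hS.nrm_eq_inv_sq]
  field_simp

theorem apply_zero_zero_eq_inv_sqrt (hS : IsFourier S) :
    S 0 0 = ((√(∑ j, deg S j))⁻¹ : ℝ) := by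
  rw [← hS.nrm_zero_eq_sum_deg, hS.nrm_eq_inv_sq, Real.sqrt_inv, inv_inv,
    Real.sqrt_sq (hS.col0_pos 0).le, hS.ofReal_re_apply_zero]

theorem exists_nat_deg (hS : IsFourier S) (hint : IntegralityHyp S) :
    ∃ k : Fin r → ℕ, (∀ j, deg S j = k j) ∧ ∀ j, k j ∣ ∑ i, k i := by
  obtain ⟨D, hpos, hnrm, hdvd⟩ := hint
  choose k hk using hdvd
  have hdeg : ∀ j, deg S j = k j := fun j => by
    have hD : (D j : ℝ) ≠ 0 := by exact_mod_cast (hpos j).ne'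
    have h := hS.deg_mul_nrm j
    rw [hnrm, hnrm, hk j, Nat.cast_mul, mul_comm] at h
    exact mul_left_cancel₀ hD h
  have hsum : D 0 = ∑ i, k i := by
    have h := hS.nrm_zero_eq_sum_deg
    simp only [hnrm, hdeg] at h
    exact_mod_cast h
  exact ⟨k, hdeg, fun j => hsum ▸ Dvd.intro_left (D j) (hk j).symm⟩

/-- The structure constant `N_{ijk}` as an integer, for use in arithmetic arguments; its complex
value is `Nstruct S i j k`. -/
def structConst (hS : IsFourier S) (i j k : Fin r) : ℤ :=
  (hS.structInt i j k).choose

theorem intCast_structConst (hS : IsFourier S) (i j k : Fin r) :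
    (hS.structConst i j k : ℂ) = Nstruct S i j k :=
  (hS.structInt i j k).choose_spec.symm

theorem structConst_right_comm (hS : IsFourier S) (hreal : RealMatrix S) (i j k : Fin r) :
    hS.structConst i j k = hS.structConst i k j := by
  suffices (hS.structConst i j k : ℂ) = hS.structConst i k j by exact_mod_cast this
  simp only [hS.intCast_structConst, Nstruct, hreal.conj_apply, mul_right_comm]

theorem structConst_zero (hS : IsFourier S) (hreal : RealMatrix S) (i j : Fin r) :
    hS.structConst i j 0 = if i = j then 1 else 0 := by
  suffices (hS.structConst i j 0 : ℂ) = if i = j then 1 else 0 by exact_mod_cast this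
  rw [hS.intCast_structConst, Nstruct, ← hS.sum_mul hreal]
  refine Finset.sum_congr rfl fun l _ => ?_
  rw [hreal.conj_apply, mul_div_cancel_right₀ _ (hS.apply_zero_ne_zero l), hS.symm l, hS.symm l]

theorem allen_mul_allen (hS : IsFourier S) (l i j : Fin r) :
    allen S l i * allen S l j = ∑ k, hS.structConst i j k * allen S l k := by
  have hexpand : ∑ k, (hS.structConst i j k : ℂ) * S l k = S l i * S l j / S l 0 := by
    calc ∑ k, (hS.structConst i j k : ℂ) * S l k
        = ∑ k, ∑ t, S t i * S t j / S t 0 * (S l k * starRingEnd ℂ (S t k)) := by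
          refine Finset.sum_congr rfl fun k _ => ?_
          rw [hS.intCast_structConst, Nstruct, Finset.sum_mul]
          exact Finset.sum_congr rfl fun t _ => by ring
      _ = ∑ t, S t i * S t j / S t 0 * ∑ k, S l k * starRingEnd ℂ (S t k) := by
          rw [Finset.sum_comm]
          simp only [Finset.mul_sum]
      _ = S l i * S l j / S l 0 := by
          simp [hS.sum_mul_conj]
  simp only [allen, ← mul_div_assoc, ← Finset.sum_div]
  rw [hexpand, div_mul_eq_mul_div]

theorem sqrt_deg_mul_sqrt_deg (hS : IsFourier S) (i j : Fin r) :
    √(deg S i) * √(deg S j) = ∑ k, hS.structConst i j k * √(deg S k) := by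
  have h := hS.allen_mul_allen 0 i j
  simp only [hS.allen_zero_eq_sqrt_deg] at h
  exact_mod_cast h

end General

section RankThree

variable {S : Matrix (Fin 3) (Fin 3) ℂ}

theorem deg_one_eq_one_add (hS : IsFourier S) (hreal : RealMatrix S) :
    deg S 1 = 1 + hS.structConst 1 1 1 * √(deg S 1) + hS.structConst 1 1 2 * √(deg S 2) := by
  have h := hS.sqrt_deg_mul_sqrt_deg 1 1
  rwa [Real.mul_self_sqrt (deg_nonneg 1), Fin.sum_univ_three, hS.structConst_zero hreal, if_pos rfl,
    Int.cast_one, one_mul, hS.deg_zero, Real.sqrt_one] at h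

theorem structConst_one_one_two_eq_of_deg_eq_one (hS : IsFourier S) (hreal : RealMatrix S)
    (h1 : deg S 1 = 1) (h2 : deg S 2 = 1) :
    hS.structConst 1 1 2 = hS.structConst 1 2 2 := by
  have hcol1 : S 1 0 = S 0 0 := by simpa [h1] using hS.apply_zero_eq_sqrt_deg_mul 1
  have hcol2 : S 2 0 = S 0 0 := by simpa [h2] using hS.apply_zero_eq_sqrt_deg_mul 2
  have hdiag : S 1 1 = S 2 2 := by
    have h10 : S 1 0 * S 0 0 + S 1 1 * S 0 1 + S 1 2 * S 0 2 = 0 := by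
      simpa [Fin.sum_univ_three] using hS.sum_mul hreal 1 0
    have h20 : S 2 0 * S 0 0 + S 2 1 * S 0 1 + S 2 2 * S 0 2 = 0 := by
      simpa [Fin.sum_univ_three] using hS.sum_mul hreal 2 0
    rw [hS.symm 0 1, hS.symm 0 2, hcol1, hcol2] at h10 h20
    rw [hS.symm 2 1] at h20
    refine mul_right_cancel₀ (hS.apply_zero_ne_zero 0) ?_
    linear_combination h10 - h20
  suffices (hS.structConst 1 1 2 : ℂ) = hS.structConst 1 2 2 by exact_mod_cast this
  simp only [hS.intCast_structConst, Nstruct, hreal.conj_apply, Fin.sum_univ_three,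
    hS.symm 0 1, hS.symm 0 2, hS.symm 2 1, hcol1, hcol2, hdiag]
  ring

theorem not_deg_eq_one_one (hS : IsFourier S) (hreal : RealMatrix S) :
    ¬(deg S 1 = 1 ∧ deg S 2 = 1) := by
  rintro ⟨h1, h2⟩
  have hprod : (1 : ℝ) = hS.structConst 1 2 1 + hS.structConst 1 2 2 := by
    simpa [Fin.sum_univ_three, hS.structConst_zero hreal, h1, h2]
      using hS.sqrt_deg_mul_sqrt_deg 1 2
  rw [hS.structConst_right_comm hreal,
    hS.structConst_one_one_two_eq_of_deg_eq_one hreal h1 h2] at hprod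
  have : 1 = hS.structConst 1 2 2 + hS.structConst 1 2 2 := by exact_mod_cast hprod
  lia

theorem not_deg_eq_two_three (hS : IsFourier S) (hreal : RealMatrix S) :
    ¬(deg S 1 = 2 ∧ deg S 2 = 3) := by
  rintro ⟨h1, h2⟩
  have hlin := hS.deg_one_eq_one_add hreal
  rw [h1, h2] at hlin
  set a := hS.structConst 1 1 1
  set b := hS.structConst 1 1 2
  have hsq : ((2 * a ^ 2 + 3 * b ^ 2 - 1 : ℤ) : ℝ) + (2 * a * b : ℤ) * √6 = 0 := by
    have h6 : √6 = √2 * √3 := by rw [← Real.sqrt_mul zero_le_two]; norm_num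
    have hsq2 : √2 ^ 2 = 2 := Real.sq_sqrt zero_le_two
    have hsq3 : √3 ^ 2 = 3 := Real.sq_sqrt zero_le_three
    push_cast
    rw [h6]
    linear_combination -(a * √2 + b * √3 + 1) * hlin - a ^ 2 * hsq2 - b ^ 2 * hsq3
  have h6_irr : Irrational √6 := irrational_sqrt_ofNat_iff.2 (by norm_num)
  have hab := (int_eq_zero_of_add_mul_irrational_eq_zero h6_irr hsq).1
  have ha : 0 ≤ a ^ 2 := sq_nonneg a
  have hb : 0 ≤ b ^ 2 := sq_nonneg b
  lia

theorem deg_eq_one_two_of_le (hS : IsFourier S) (hreal : RealMatrix S)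
    (hint : IntegralityHyp S) (hle : deg S 1 ≤ deg S 2) : deg S 1 = 1 ∧ deg S 2 = 2 := by
  obtain ⟨k, hk, hdvd⟩ := hS.exists_nat_deg hint
  have hk0 : k 0 = 1 := by exact_mod_cast (hk 0).symm.trans hS.deg_zero
  have hk12 : k 1 ≤ k 2 := by
    rw [hk, hk] at hle
    exact_mod_cast hle
  simp only [Fin.sum_univ_three, hk0] at hdvd
  obtain ⟨h1, h2⟩ | ⟨h1, h2⟩ | ⟨h1, h2⟩ :=
    eq_or_eq_of_dvd_one_add_add_of_le (hdvd 1) (hdvd 2) hk12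
  · exact absurd (by simp [hk, h1, h2]) (hS.not_deg_eq_one_one hreal)
  · simp [hk, h1, h2]
  · exact absurd (by simp [hk, h1, h2]) (hS.not_deg_eq_two_three hreal)

theorem structConst_one_one_eq_zero (hS : IsFourier S) (hreal : RealMatrix S)
    (h1 : deg S 1 = 1) (h2 : deg S 2 = 2) :
    hS.structConst 1 1 1 = 0 ∧ hS.structConst 1 1 2 = 0 := by
  refine int_eq_zero_of_add_mul_irrational_eq_zero irrational_sqrt_two ?_
  have h := hS.deg_one_eq_one_add hreal
  rw [h1, h2, Real.sqrt_one] at h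
  linear_combination -h

theorem apply_one_eq_or_eq_neg (hS : IsFourier S) (hreal : RealMatrix S)
    (h1 : deg S 1 = 1) (h2 : deg S 2 = 2) (l : Fin 3) : S l 1 = S l 0 ∨ S l 1 = -S l 0 := by
  obtain ⟨h111, h112⟩ := hS.structConst_one_one_eq_zero hreal h1 h2
  have hl := hS.apply_zero_ne_zero l
  have hsq : allen S l 1 * allen S l 1 = 1 := by
    rw [hS.allen_mul_allen]
    simp [Fin.sum_univ_three, hS.structConst_zero hreal, h111, h112, allen, hl]
  rw [mul_self_eq_one_iff, allen, div_eq_iff hl, div_eq_iff hl] at hsq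
  simpa using hsq

theorem apply_zero_of_deg_eq_one_two (hS : IsFourier S) (h1 : deg S 1 = 1) (h2 : deg S 2 = 2) :
    S 0 0 = 1 / 2 ∧ S 1 0 = 1 / 2 ∧ S 2 0 = (√2 : ℂ)⁻¹ := by
  have h00 : S 0 0 = 1 / 2 := by
    have hsum : ∑ j, deg S j = 2 ^ 2 := by
      rw [Fin.sum_univ_three, hS.deg_zero, h1, h2]
      norm_num
    rw [hS.apply_zero_zero_eq_inv_sqrt, hsum, Real.sqrt_sq zero_le_two]
    norm_num
  refine ⟨h00, by simp [hS.apply_zero_eq_sqrt_deg_mul 1, h1, h00], ?_⟩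
  rw [hS.apply_zero_eq_sqrt_deg_mul 2, h2, h00, one_div, ← div_eq_mul_inv]
  exact_mod_cast Real.sqrt_div_self

theorem eq_rank3Matrix (hS : IsFourier S) (hreal : RealMatrix S)
    (h1 : deg S 1 = 1) (h2 : deg S 2 = 2) : S = rank3Matrix := by
  obtain ⟨h00, h10, h20⟩ := hS.apply_zero_of_deg_eq_one_two h1 h2
  have hsqrt : (√2 : ℂ)⁻¹ * (√2 : ℂ)⁻¹ = 1 / 2 := by
    rw [← mul_inv, ← ofReal_mul, Real.mul_self_sqrt zero_le_two]
    norm_num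
  have hne : (√2 : ℂ)⁻¹ ≠ 0 := h20 ▸ hS.apply_zero_ne_zero 2
  have orth10 : S 1 0 * S 0 0 + S 1 1 * S 0 1 + S 1 2 * S 0 2 = 0 := by
    simpa [Fin.sum_univ_three] using hS.sum_mul hreal 1 0
  have orth20 : S 2 0 * S 0 0 + S 2 1 * S 0 1 + S 2 2 * S 0 2 = 0 := by
    simpa [Fin.sum_univ_three] using hS.sum_mul hreal 2 0
  rw [hS.symm 0 1, hS.symm 0 2, h00, h10, h20] at orth10 orth20
  rw [hS.symm 1 2] at orth10
  obtain ⟨h11, h21⟩ : S 1 1 = 1 / 2 ∧ S 2 1 = -(√2 : ℂ)⁻¹ := by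
    have sign1 := hS.apply_one_eq_or_eq_neg hreal h1 h2 1
    have sign2 := hS.apply_one_eq_or_eq_neg hreal h1 h2 2
    rw [h10] at sign1
    rw [h20] at sign2
    rcases sign1 with h11 | h11 <;> rcases sign2 with h21 | h21
    case inl.inr => exact ⟨h11, h21⟩
    all_goals
      rw [h11, h21] at orth10
      simp only [neg_mul, hsqrt] at orth10
      norm_num at orth10
  have h22 : S 2 2 = 0 := by
    rw [h21] at orth20
    refine (mul_eq_zero.1 ?_).resolve_right hne
    linear_combination orth20
  ext i j
  fin_cases i <;> fin_cases j <;>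
    simp [rank3Matrix, hS.symm 0 1, hS.symm 0 2, hS.symm 1 2, h00, h10, h20, h11, h21, h22]

end RankThree

end IsFourier

/-- every `3 × 3` real Fourier matrix satisfying the integrality
hypothesis has degrees `{1, 2}` and is, up to a simultaneous permutation fixing `0`,
the matrix `[[1/2,1/2,1/√2],[1/2,1/2,−1/√2],[1/√2,−1/√2,0]]`. -/
theorem stmt11 (S : Matrix (Fin 3) (Fin 3) ℂ)
    (hS : IsFourier S) (hreal : RealMatrix S)
    (hint : IntegralityHyp S) :
    ({deg S 1, deg S 2} : Multiset ℝ) = ({1, 2} : Multiset ℝ) ∧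
    ∃ σ : Equiv.Perm (Fin 3), σ 0 = 0 ∧ ∀ i j, S (σ i) (σ j) = rank3Matrix i j := by
  rcases le_total (deg S 1) (deg S 2) with hle | hle
  · obtain ⟨h1, h2⟩ := hS.deg_eq_one_two_of_le hreal hint hle
    exact ⟨by rw [h1, h2], 1, rfl, congrFun₂ (hS.eq_rank3Matrix hreal h1 h2)⟩
  · let σ : Equiv.Perm (Fin 3) := Equiv.swap 1 2
    have hσ : σ 0 = 0 := by decide
    have hT : IsFourier (S.submatrix σ σ) := hS.submatrix hσ
    have hTreal : RealMatrix (S.submatrix σ σ) := fun i j => hreal (σ i) (σ j)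
    have hdeg1 : deg (S.submatrix σ σ) 1 = deg S 2 := deg_submatrix hσ 1
    have hdeg2 : deg (S.submatrix σ σ) 2 = deg S 1 := deg_submatrix hσ 2
    obtain ⟨h1, h2⟩ :=
      hT.deg_eq_one_two_of_le hTreal (hint.submatrix hσ) (by rwa [hdeg1, hdeg2])
    refine ⟨?_, σ, hσ, congrFun₂ (hT.eq_rank3Matrix hTreal h1 h2)⟩
    rw [← hdeg1, ← hdeg2, h1, h2, Multiset.pair_comm]

end

end FourierPaper
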